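/- Inverse acting on the down block: for every m with 1 ≤ m ≤ M, (B^m)^{−1} D^m = −1 δ_0, i.e. the matrix whose (i,j) entry is −1 if j = 0 and 0 otherwise. -/

import Mathlib

open Matrix

/-!
A matrix all of whose mass sits in column `e` is determined by its row sums. The block `D` down
from a level has this shape, and redirecting the upward transitions into column `e` keeps the row
sums of the level, so `B 1 = -D 1`. Hence `D = D 1 δ_e = -B 1 δ_e`, and `B` cancels.
-/

section CollapseTo

variable {m n o R : Type*} [Fintype n] [DecidableEq n]

/-- The matrix `A 1 δ_e`, which moves the whole of each row of `A` into column `e`. -/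
def collapseTo [NonAssocSemiring R] (e : n) (A : Matrix m n R) : Matrix m n R :=
  vecMulVec (A *ᵥ 1) (Pi.single e 1)

theorem collapseTo_apply [NonAssocSemiring R] (e : n) (A : Matrix m n R) (i : m) (j : n) :
    collapseTo e A i j = if j = e then ∑ k, A i k else 0 := by
  simp [collapseTo, vecMulVec_apply, Pi.single_apply, mulVec, dotProduct_one]

theorem collapseTo_mulVec_one [NonAssocSemiring R] (e : n) (A : Matrix m n R) :
    collapseTo e A *ᵥ 1 = A *ᵥ 1 := by
  ext i
  simp [mulVec, dotProduct_one, collapseTo_apply]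

theorem collapseTo_eq_self [NonAssocSemiring R] {e : n} {A : Matrix m n R}
    (hA : ∀ i j, j ≠ e → A i j = 0) : collapseTo e A = A := by
  ext i j
  rw [collapseTo_apply]
  split_ifs with hj
  · rw [hj, Fintype.sum_eq_single e (hA i)]
  · exact (hA i j hj).symm

theorem mul_collapseTo [Semiring R] [Fintype m] (e : n) (B : Matrix o m R) (A : Matrix m n R) :
    B * collapseTo e A = collapseTo e (B * A) := by
  rw [collapseTo, collapseTo, mul_vecMulVec, mulVec_mulVec]

theorem inv_mul_eq_neg_vecMulVec_of_add_mulVec_one_eq_zero [CommRing R] {e : n} {B D : Matrix n n R}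
    (hB : IsUnit B) (hD : ∀ i j, j ≠ e → D i j = 0) (hBD : (B + D) *ᵥ 1 = 0) :
    B⁻¹ * D = -vecMulVec 1 (Pi.single e 1) := by
  have hD_sum : D *ᵥ 1 = -B *ᵥ 1 := by
    rw [add_mulVec] at hBD
    rw [neg_mulVec, eq_neg_of_add_eq_zero_right hBD]
  have hBB : B⁻¹ * -B = -1 := by
    rw [Matrix.mul_neg, nonsing_inv_mul B ((isUnit_iff_isUnit_det B).mp hB)]
  calc B⁻¹ * D = B⁻¹ * collapseTo e D := by rw [collapseTo_eq_self hD]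
    _ = B⁻¹ * collapseTo e (-B) := by rw [collapseTo, collapseTo, hD_sum]
    _ = collapseTo e (-1) := by rw [mul_collapseTo, hBB]
    _ = -vecMulVec 1 (Pi.single e 1) := by rw [collapseTo, neg_mulVec, one_mulVec, neg_vecMulVec]

end CollapseTo

section Levels

variable {L ι K : Type*}

/-- The block of transitions from level `m` to level `n`, for states `(level, stage)`. -/
def levelBlock (Q : Matrix (L × ι) (L × ι) K) (m n : L) : Matrix ι ι K :=
  Q.submatrix (Prod.mk m) (Prod.mk n)

variable [Fintype L] [DecidableEq L] [Fintype ι] [DecidableEq ι]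

/-- The block of level `m` in which every transition to a level other than `m` and `p` is
redirected to stage `e` of level `m`. If `Q` is block tridiagonal and `p = m - 1`, this is the
matrix `B^m = W^m + U^m 1 δ_e`, with `U^M = 0` at the top level. -/
def redirectedBlock [NonAssocSemiring K] (Q : Matrix (L × ι) (L × ι) K) (e : ι) (m p : L) :
    Matrix ι ι K :=
  levelBlock Q m m + ∑ n ∈ {m, p}ᶜ, collapseTo e (levelBlock Q m n)

theorem redirectedBlock_add_levelBlock_mulVec_one [NonAssocSemiring K]
    (Q : Matrix (L × ι) (L × ι) K) (e : ι) {m p : L} (hmp : m ≠ p) :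
    (redirectedBlock Q e m p + levelBlock Q m p) *ᵥ 1 = fun i => ∑ t, Q (m, i) t := by
  calc (redirectedBlock Q e m p + levelBlock Q m p) *ᵥ 1
      = ∑ n ∈ {m, p}, levelBlock Q m n *ᵥ 1 + ∑ n ∈ {m, p}ᶜ, levelBlock Q m n *ᵥ 1 := by
        simp only [redirectedBlock, add_mulVec, sum_mulVec, collapseTo_mulVec_one,
          Finset.sum_pair hmp, add_right_comm]
    _ = ∑ n, levelBlock Q m n *ᵥ 1 := Finset.sum_add_sum_compl _ _
    _ = fun i => ∑ t, Q (m, i) t := by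
        ext i
        simp only [Finset.sum_apply, mulVec, dotProduct_one, levelBlock, submatrix_apply,
          Fintype.sum_prod_type]

theorem stmt_9_general [CommRing K] {Q : Matrix (L × ι) (L × ι) K} {e : ι} {m p : L}
    (hmp : m ≠ p) (hrow : ∀ i, ∑ t, Q (m, i) t = 0)
    (hDES : ∀ i j, j ≠ e → levelBlock Q m p i j = 0) (hB : IsUnit (redirectedBlock Q e m p)) :
    (redirectedBlock Q e m p)⁻¹ * levelBlock Q m p = -vecMulVec 1 (Pi.single e 1) :=
  inv_mul_eq_neg_vecMulVec_of_add_mulVec_one_eq_zero hB hDES <|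
    (redirectedBlock_add_levelBlock_mulVec_one Q e hmp).trans (funext hrow)

end Levels

section Tridiagonal

variable {M : ℕ}

theorem sum_compl_pair_of_tridiagonal {A : Type*} [AddCommMonoid A] {m p : Fin (M + 1)}
    (hp : p.val + 1 = m.val) {f : Fin (M + 1) → A}
    (hf : ∀ n : Fin (M + 1), 1 < |(m.val : ℤ) - (n.val : ℤ)| → f n = 0) :
    ∑ n ∈ {m, p}ᶜ, f n = if h : m.val < M then f ⟨m + 1, by omega⟩ else 0 := by
  have far {n : Fin (M + 1)} (hn : n ∈ ({m, p} : Finset (Fin (M + 1)))ᶜ)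
      (hn_succ : n.val ≠ m.val + 1) : f n = 0 := by
    simp only [Finset.mem_compl, Finset.mem_insert, Finset.mem_singleton, Fin.ext_iff] at hn
    exact hf n (lt_abs.mpr (by omega))
  split_ifs with h
  · refine Finset.sum_eq_single_of_mem _ ?_ fun n hn hne => far hn (Fin.val_ne_of_ne hne)
    simp only [Finset.mem_compl, Finset.mem_insert, Finset.mem_singleton, Fin.ext_iff]
    omega
  · exact Finset.sum_eq_zero fun n hn => far hn (by omega)

theorem redirectedBlock_apply_of_tridiagonal {ι K : Type*} [Fintype ι] [DecidableEq ι]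
    [NonAssocSemiring K] {Q : Matrix (Fin (M + 1) × ι) (Fin (M + 1) × ι) K} (e : ι)
    {m p : Fin (M + 1)} (hp : p.val + 1 = m.val)
    (htri : ∀ (n : Fin (M + 1)) (i j : ι),
      1 < |(m.val : ℤ) - (n.val : ℤ)| → Q (m, i) (n, j) = 0) (i j : ι) :
    redirectedBlock Q e m p i j = Q (m, i) (m, j) +
      if h : m.val < M then
        if j = e then ∑ k, Q (m, i) (⟨m + 1, by omega⟩, k) else 0
      else 0 := by
  simp only [redirectedBlock, Matrix.add_apply, Matrix.sum_apply, collapseTo_apply, levelBlock,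
    submatrix_apply]
  rw [sum_compl_pair_of_tridiagonal hp]
  intro n hn
  simp only [htri n i _ hn, Finset.sum_const_zero, ite_self]

end Tridiagonal

theorem stmt_9
    (M l : ℕ) (hM : 1 ≤ M)
    (Q : Matrix (Fin (M+1) × Fin (l+1)) (Fin (M+1) × Fin (l+1)) ℝ)
    (htri : ∀ (m n : Fin (M+1)) (i j : Fin (l+1)),
      1 < |(m.val : ℤ) - (n.val : ℤ)| → Q (m, i) (n, j) = 0)
    (hrow : ∀ s, ∑ t, Q s t = 0)
    (W U D : ℕ → Matrix (Fin (l+1)) (Fin (l+1)) ℝ)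
    (hW : ∀ (m : ℕ) (hm : m ≤ M) (i j : Fin (l+1)),
      W m i j = Q (⟨m, by omega⟩, i) (⟨m, by omega⟩, j))
    (hU : ∀ (m : ℕ) (hm : m < M) (i j : Fin (l+1)),
      U m i j = Q (⟨m, by omega⟩, i) (⟨m+1, by omega⟩, j))
    (hD : ∀ (m : ℕ) (hm1 : 1 ≤ m) (hm2 : m ≤ M) (i j : Fin (l+1)),
      D m i j = Q (⟨m, by omega⟩, i) (⟨m-1, by omega⟩, j))
    (hDES : ∀ (m : ℕ), 1 ≤ m → m ≤ M → ∀ (i j : Fin (l+1)), j ≠ 0 → D m i j = 0)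
    (Ut : ℕ → Matrix (Fin (l+1)) (Fin (l+1)) ℝ)
    (hUt : ∀ (m : ℕ), m < M → ∀ (i j : Fin (l+1)),
      Ut m i j = if j = 0 then ∑ k, U m i k else 0)
    (hUtM : Ut M = 0)
    (B : ℕ → Matrix (Fin (l+1)) (Fin (l+1)) ℝ)
    (hB : ∀ (m : ℕ), m ≤ M → B m = W m + Ut m)
    (hBinv : ∀ (m : ℕ), 1 ≤ m → m ≤ M → IsUnit (B m))
    (R : ℕ → Matrix (Fin (l+1)) (Fin (l+1)) ℝ)
    (hR : ∀ (m : ℕ), 1 ≤ m → m ≤ M → R m = -(U (m-1) * (B m)⁻¹)) :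
    ∀ (m : ℕ) (hm1 : 1 ≤ m) (hm2 : m ≤ M),
      (B m)⁻¹ * D m
        = -(Matrix.vecMulVec (fun _ => (1:ℝ)) (fun j => if j = (0 : Fin (l+1)) then (1:ℝ) else 0)) := by
  intro m hm1 hm2
  let s : Fin (M+1) := ⟨m, by omega⟩
  let p : Fin (M+1) := ⟨m-1, by omega⟩
  have hps : p.val + 1 = s.val := Nat.sub_add_cancel hm1
  have hDm : D m = levelBlock Q s p := Matrix.ext (hD m hm1 hm2)
  have hBm : B m = redirectedBlock Q 0 s p := by
    ext i j
    rw [hB m hm2, Matrix.add_apply, hW m hm2, redirectedBlock_apply_of_tridiagonal 0 hps (htri s)]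
    rcases hm2.lt_or_eq with hlt | rfl
    · simp only [hUt m hlt, hU m hlt, s, hlt, dite_true]
    · simp only [hUtM, Matrix.zero_apply, s, lt_irrefl, dite_false]
  have hδ : (fun j : Fin (l+1) => if j = 0 then (1:ℝ) else 0) = Pi.single 0 1 :=
    (funext (Pi.single_apply 0 1)).symm
  rw [hδ, hBm, hDm]
  exact stmt_9_general (Fin.ne_of_val_ne (by omega)) (fun i => hrow (s, i))
    (hDm ▸ hDES m hm1 hm2) (hBm ▸ hBinv m hm1 hm2)
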